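/- Let Ω be a probability space with probability measure μ, let S, S*, T, U, and V be finite types equipped with measurable structures in which all singletons are measurable, let G : Ω → S, G* : Ω → S*, and Y : Ω → T be measurable random variables, let t : S → U be a measurable function (a data augmentation), and let f* : S → V and f*' : S* → V be injective measurable functions (the optimal encoder applied to the graph and to the anchor view, respectively). Suppose that I[f*' ∘ G* ; Y] = I[f* ∘ G ; Y] (the encoded anchor view carries the same label-relevant information as the encoded input graph). Then I[G* ; Y] ≥ I[t ∘ G ; Y]. -/

import Mathlib

open MeasureTheory Finset

/-- Shannon entropy of a finite-valued random variable:
`H[X] = -∑ x, P(X = x) * log P(X = x)`. -/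
noncomputable def shannonEntropy {Ω : Type*} [MeasurableSpace Ω] (μ : Measure Ω)
    {S : Type*} [Fintype S] (X : Ω → S) : ℝ :=
  -∑ x : S, (μ (X ⁻¹' {x})).toReal * Real.log (μ (X ⁻¹' {x})).toReal

/-- Conditional Shannon entropy
`H[Y | X] = -∑ x, ∑ y, P(Y = y, X = x) * log (P(Y = y | X = x))`,
where `P(Y = y | X = x) = P(Y = y, X = x) / P(X = x)`. -/
noncomputable def condShannonEntropy {Ω : Type*} [MeasurableSpace Ω] (μ : Measure Ω)
    {S T : Type*} [Fintype S] [Fintype T] (Y : Ω → T) (X : Ω → S) : ℝ :=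
  -∑ x : S, ∑ y : T, (μ (Y ⁻¹' {y} ∩ X ⁻¹' {x})).toReal *
    Real.log ((μ (Y ⁻¹' {y} ∩ X ⁻¹' {x})).toReal / (μ (X ⁻¹' {x})).toReal)

/-- Mutual information `I[X ; Y] = H[X] + H[Y] - H[⟨X, Y⟩]`. -/
noncomputable def mutualInfo {Ω : Type*} [MeasurableSpace Ω] (μ : Measure Ω)
    {S T : Type*} [Fintype S] [Fintype T] (X : Ω → S) (Y : Ω → T) : ℝ :=
  shannonEntropy μ X + shannonEntropy μ Y - shannonEntropy μ (fun ω => (X ω, Y ω))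

/-- Change of variables for finite-valued random variables. -/
theorem aux_sum_comp {Ω : Type*} [MeasurableSpace Ω] (μ : Measure Ω) [IsProbabilityMeasure μ]
    {S U : Type*} [Fintype S] [Fintype U] (X : Ω → S)
    (hX : ∀ s, MeasurableSet (X ⁻¹' {s})) (φ : S → U) (g : U → ℝ) :
    ∑ u, (μ ((fun ω => φ (X ω)) ⁻¹' {u})).toReal * g u
      = ∑ s, (μ (X ⁻¹' {s})).toReal * g (φ s) := by
  classical
  rw [← Finset.sum_fiberwise (s := Finset.univ) (g := φ)]
  refine Finset.sum_congr rfl fun u _ => ?_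
  have h := sum_measureReal_preimage_singleton (μ := μ) (f := X)
    (Finset.univ.filter fun s => φ s = u) (fun s _ => hX s)
  have h2 : (fun ω => φ (X ω)) ⁻¹' {u}
      = X ⁻¹' ((Finset.univ.filter fun s => φ s = u : Finset S) : Set S) := by
    ext ω; simp
  rw [h2]
  change μ.real _ * g u = _
  rw [← h, Finset.sum_mul]
  refine Finset.sum_congr rfl fun s hs => ?_
  rw [(Finset.mem_filter.1 hs).2]
  rfl

theorem aux_entropy_inj {Ω : Type*} [MeasurableSpace Ω] (μ : Measure Ω) [IsProbabilityMeasure μ]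
    {S U : Type*} [Fintype S] [Fintype U] (X : Ω → S)
    (hX : ∀ s, MeasurableSet (X ⁻¹' {s})) (φ : S → U) (hφ : Function.Injective φ) :
    shannonEntropy μ (fun ω => φ (X ω)) = shannonEntropy μ X := by
  unfold shannonEntropy
  rw [aux_sum_comp μ X hX φ (fun u => Real.log (μ ((fun ω => φ (X ω)) ⁻¹' {u})).toReal)]
  congr 1
  refine Finset.sum_congr rfl fun s _ => ?_
  have : (fun ω => φ (X ω)) ⁻¹' {φ s} = X ⁻¹' {s} := by
    ext ω; simp [hφ.eq_iff]
  simp only [this]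

theorem aux_pair {Ω : Type*} [MeasurableSpace Ω]
    {S T : Type*} (X : Ω → S) (Y : Ω → T)
    (hX : ∀ s, MeasurableSet (X ⁻¹' {s})) (hY : ∀ s, MeasurableSet (Y ⁻¹' {s})) (z : S × T) :
    MeasurableSet ((fun ω => (X ω, Y ω)) ⁻¹' {z}) := by
  have : (fun ω => (X ω, Y ω)) ⁻¹' {z} = X ⁻¹' {z.1} ∩ Y ⁻¹' {z.2} := by
    ext ω; simp [Prod.ext_iff]
  rw [this]
  exact (hX _).inter (hY _)

theorem aux_mutualInfo_inj {Ω : Type*} [MeasurableSpace Ω] (μ : Measure Ω)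
    [IsProbabilityMeasure μ]
    {S T U : Type*} [Fintype S] [Fintype T] [Fintype U] (X : Ω → S) (Y : Ω → T)
    (hX : ∀ s, MeasurableSet (X ⁻¹' {s})) (hY : ∀ s, MeasurableSet (Y ⁻¹' {s}))
    (φ : S → U) (hφ : Function.Injective φ) :
    mutualInfo μ (φ ∘ X) Y = mutualInfo μ X Y := by
  have h1 := aux_entropy_inj μ X hX φ hφ
  have h2 := aux_entropy_inj μ (fun ω => (X ω, Y ω)) (aux_pair X Y hX hY) (Prod.map φ id)
    (hφ.prodMap Function.injective_id)
  unfold mutualInfo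
  change shannonEntropy μ (fun ω => φ (X ω)) + _ -
    shannonEntropy μ (fun ω => Prod.map φ id (X ω, Y ω)) = _
  rw [h1, h2]

theorem aux_pointwise {p P q Q : ℝ} (hp : 0 ≤ p) (hpP : p ≤ P) (hpq : p ≤ q) (hPQ : P ≤ Q) :
    p - P * q / Q ≤ p * (Real.log p - Real.log P - Real.log q + Real.log Q) := by
  rcases hp.eq_or_lt with rfl | hp
  · have : 0 ≤ P * q / Q := by
      have := hpP.trans hPQ
      positivity
    simpa using this
  · have hP : 0 < P := by linarith
    have hq : 0 < q := by linarith
    have hQ : 0 < Q := by linarith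
    have h := Real.log_le_sub_one_of_pos (x := P * q / (Q * p)) (by positivity)
    rw [Real.log_div (by positivity) (by positivity), Real.log_mul hP.ne' hq.ne',
      Real.log_mul hQ.ne' hp.ne'] at h
    have h3 := mul_le_mul_of_nonneg_left h hp.le
    have h4 : p * (P * q / (Q * p) - 1) = P * q / Q - p := by field_simp
    rw [h4] at h3
    linarith

/-- Data processing inequality. -/
theorem aux_dpi {Ω : Type*} [MeasurableSpace Ω] (μ : Measure Ω) [IsProbabilityMeasure μ]
    {S T U : Type*} [Fintype S] [Fintype T] [Fintype U] (X : Ω → S) (Y : Ω → T)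
    (hX : ∀ s, MeasurableSet (X ⁻¹' {s})) (hY : ∀ s, MeasurableSet (Y ⁻¹' {s}))
    (t : S → U) (ht : ∀ u, MeasurableSet ((fun ω => t (X ω)) ⁻¹' {u})) :
    mutualInfo μ (t ∘ X) Y ≤ mutualInfo μ X Y := by
  classical
  have hXY := aux_pair X Y hX hY
  have htY := aux_pair (fun ω => t (X ω)) Y ht hY
  set p : S × T → ℝ := fun z => (μ ((fun ω => (X ω, Y ω)) ⁻¹' {z})).toReal with hp
  set P : S → ℝ := fun s => (μ (X ⁻¹' {s})).toReal with hP
  set q : U × T → ℝ := fun z => (μ ((fun ω => (t (X ω), Y ω)) ⁻¹' {z})).toReal with hq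
  set Q : U → ℝ := fun u => (μ ((fun ω => t (X ω)) ⁻¹' {u})).toReal with hQ
  have cP : ∀ g : S → ℝ, ∑ s, P s * g s = ∑ z, p z * g z.1 := fun g =>
    aux_sum_comp μ _ hXY Prod.fst g
  have cQ : ∀ g : U → ℝ, ∑ u, Q u * g u = ∑ z, p z * g (t z.1) := fun g =>
    aux_sum_comp μ _ hXY (fun z => t z.1) g
  have cq : ∀ g : U × T → ℝ, ∑ u, q u * g u = ∑ z, p z * g (t z.1, z.2) := fun g =>
    aux_sum_comp μ _ hXY (fun z => (t z.1, z.2)) g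
  have cqQ : ∀ u, ∑ y, q (u, y) = Q u := by
    intro u
    have h : ∑ u, Q u * _ = ∑ z, q z * _ :=
      aux_sum_comp μ _ htY Prod.fst (fun v => if v = u then 1 else 0)
    rw [Fintype.sum_prod_type_right] at h
    simpa using h.symm
  have mono : ∀ {A B : Set Ω}, A ⊆ B → (μ A).toReal ≤ (μ B).toReal := fun h =>
    ENNReal.toReal_mono (measure_ne_top μ _) (measure_mono h)
  have key : ∀ z : S × T, p z - P z.1 * q (t z.1, z.2) / Q (t z.1) ≤
      p z * (Real.log (p z) - Real.log (P z.1) - Real.log (q (t z.1, z.2))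
        + Real.log (Q (t z.1))) := by
    intro z
    apply aux_pointwise
    · exact ENNReal.toReal_nonneg
    · apply mono; rintro ω rfl; rfl
    · apply mono; rintro ω rfl; rfl
    · apply mono; intro ω h; exact congrArg t h
  have hsum := Finset.sum_le_sum (s := Finset.univ) fun z _ => key z
  have hpos : 0 ≤ ∑ z : S × T, (p z - P z.1 * q (t z.1, z.2) / Q (t z.1)) := by
    rw [Finset.sum_sub_distrib, sub_nonneg]
    have h1 := cP (fun _ => 1)
    simp only [mul_one] at h1
    rw [← h1, Fintype.sum_prod_type]
    refine Finset.sum_le_sum fun s _ => ?_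
    have hPs : 0 ≤ P s := ENNReal.toReal_nonneg
    simp only []
    rw [← Finset.sum_div, ← Finset.mul_sum, cqQ, mul_div_assoc]
    exact mul_le_of_le_one_right hPs (div_self_le_one _)
  have e1 := cP (fun s => Real.log (P s))
  have e2 := cQ (fun s => Real.log (Q s))
  have e3 := cq (fun s => Real.log (q s))
  simp only [mul_add, mul_sub, Finset.sum_add_distrib, Finset.sum_sub_distrib] at hsum hpos
  rw [← e1, ← e2, ← e3] at hsum
  have r1 : shannonEntropy μ (t ∘ X) = -∑ u, Q u * Real.log (Q u) := rfl
  have r2 : shannonEntropy μ X = -∑ u, P u * Real.log (P u) := rfl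
  have r3 : shannonEntropy μ (fun ω => ((t ∘ X) ω, Y ω)) = -∑ u, q u * Real.log (q u) := rfl
  have r4 : shannonEntropy μ (fun ω => (X ω, Y ω)) = -∑ u, p u * Real.log (p u) := rfl
  unfold mutualInfo
  rw [r1, r2, r3, r4]
  linarith

/-- Full chain of the paper's proof of Theorem 4.2: with injective measurable encoders
`f*` and `f*'`, if the encoded anchor view carries the same label-relevant information as the
encoded input graph, `I[f*' ∘ G* ; Y] = I[f* ∘ G ; Y]`, then for any data augmentation `t`,
`I[G* ; Y] ≥ I[t ∘ G ; Y]`. -/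
theorem anchorView_mutualInfo_ge_augmented_of_encoder
    {Ω : Type*} [MeasurableSpace Ω] (μ : Measure Ω) [IsProbabilityMeasure μ]
    {S Sstar T U V : Type*} [Fintype S] [Fintype Sstar] [Fintype T] [Fintype U] [Fintype V]
    [MeasurableSpace S] [MeasurableSingletonClass S]
    [MeasurableSpace Sstar] [MeasurableSingletonClass Sstar]
    [MeasurableSpace T] [MeasurableSingletonClass T]
    [MeasurableSpace U] [MeasurableSingletonClass U]
    [MeasurableSpace V] [MeasurableSingletonClass V]
    (G : Ω → S) (hG : Measurable G) (Gstar : Ω → Sstar) (hGstar : Measurable Gstar)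
    (Y : Ω → T) (hY : Measurable Y)
    (t : S → U) (ht : Measurable t)
    (fstar : S → V) (hfstar : Measurable fstar) (hfstar_inj : Function.Injective fstar)
    (fstar' : Sstar → V) (hfstar' : Measurable fstar')
    (hfstar'_inj : Function.Injective fstar')
    (hEnc : mutualInfo μ (fstar' ∘ Gstar) Y = mutualInfo μ (fstar ∘ G) Y) :
    mutualInfo μ (t ∘ G) Y ≤ mutualInfo μ Gstar Y := by
  have hX := fun s => hG (measurableSet_singleton s)
  have hXs := fun s => hGstar (measurableSet_singleton s)
  have hYs := fun s => hY (measurableSet_singleton s)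
  rw [aux_mutualInfo_inj μ Gstar Y hXs hYs fstar' hfstar'_inj,
    aux_mutualInfo_inj μ G Y hX hYs fstar hfstar_inj] at hEnc
  rw [hEnc]
  exact aux_dpi μ G Y hX hYs t (fun u => (ht.comp hG) (measurableSet_singleton u))
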